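/- For any initialized pair (v₀,v) of clock valuations and any δ > 0, the following are equivalent: (1) next([(v₀,v)], int(v)) = ([(v₀,v+δ)], int(v+δ)); (2) v has one pattern change for δ. -/

import Mathlib

open scoped BigOperators

namespace PTApaper

/-! ## Clock valuations -/

/-- A (raw) clock valuation on clocks `x_0, …, x_k`. -/
abbrev Val (k : ℕ) := Fin (k+1) → ℝ

/-- A discrete clock valuation. -/
abbrev DVal (k : ℕ) := Fin (k+1) → ℕ

/-- A clock valuation takes nonnegative values. -/
def IsVal {k : ℕ} (v : Val k) : Prop := ∀ i, 0 ≤ v i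

/-- A valuation is initial if the auxiliary clock `x_0` has value 0. -/
def Initial {k : ℕ} (v : Val k) : Prop := v 0 = 0

/-- The integral part `int(v)` of a valuation. -/
noncomputable def intPart {k : ℕ} (v : Val k) : DVal k := fun i => (⌊v i⌋).toNat

/-- The fractional parts of the relative representation `rel(v)`:
`fract(rel(v))(0) = fract (1 - fract (v 0))` and
`fract(rel(v))(i) = fract (fract (v i) + fract(rel(v))(0))` for `i ∈ K⁺`. -/
noncomputable def relFract {k : ℕ} (v : Val k) : Fin (k+1) → ℝ := fun i =>
  if i = 0 then Int.fract (1 - Int.fract (v 0))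
  else Int.fract (Int.fract (v i) + Int.fract (1 - Int.fract (v 0)))

/-- Synchronous clock progress `v + δ`. -/
def shift {k : ℕ} (v : Val k) (δ : ℝ) : Val k := fun i => v i + δ

/-- Clock reset `v↓_r`. -/
def resetVal {k : ℕ} (r : Finset (Fin (k+1))) (v : Val k) : Val k :=
  fun i => if i ∈ r then 0 else v i

/-! ## Patterns -/

/-- A raw pattern: a finite sequence of subsets of `K⁰ ∪ K¹`, where the index
`(i, false)` stands for `i⁰` and `(i, true)` stands for `i¹`. -/
abbrev PatSeq (k : ℕ) := List (Finset (Fin (k+1) × Bool))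

/-- The well-formedness conditions making `η = p₀,…,p_n` a pattern:
`0 ≤ n < 2(k+1)`, the `p_m` are nonempty and pairwise disjoint, `0⁰ ∈ p₀`,
and `p₀ ∪ … ∪ p_n = K⁰ ∪ K¹`. -/
def IsPattern {k : ℕ} (η : PatSeq k) : Prop :=
  η.length ≤ 2*(k+1) ∧
  (∀ p ∈ η, p.Nonempty) ∧
  η.Pairwise Disjoint ∧
  ((0 : Fin (k+1)), false) ∈ η.getD 0 ∅ ∧
  (∀ x : Fin (k+1) × Bool, ∃ p ∈ η, x ∈ p)

/-- `bval v₀ v₁ b` is `v_b`. -/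
def bval {k : ℕ} (v₀ v₁ : Val k) : Bool → Val k
  | false => v₀
  | true => v₁

/-- The defining ordering condition for "`(v₀,v₁)` has pattern `η = p₀,…,p_n`":
for all positions `m, m'`, copies `b, b'` and clocks `i, i'` with `i^b ∈ p_m` and
`i'^{b'} ∈ p_{m'}`, `fract(rel(v_b))(i) = fract(rel(v_{b'}))(i')` iff `m = m'`, and
`fract(rel(v_b))(i) < fract(rel(v_{b'}))(i')` iff `m < m'`. -/
def HasPatternOrd {k : ℕ} (v₀ v₁ : Val k) (η : PatSeq k) : Prop :=
  ∀ m m' : Fin η.length, ∀ b b' : Bool, ∀ i i' : Fin (k+1),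
    (i, b) ∈ η.get m → (i', b') ∈ η.get m' →
      ((relFract (bval v₀ v₁ b) i = relFract (bval v₀ v₁ b') i' ↔ m = m') ∧
       (relFract (bval v₀ v₁ b) i < relFract (bval v₀ v₁ b') i' ↔ (m : ℕ) < (m' : ℕ)))

/-- `(v₀,v₁)` has pattern `η` (written `[(v₀,v₁)] = η`). -/
def PatternOf {k : ℕ} (v₀ v₁ : Val k) (η : PatSeq k) : Prop :=
  IsPattern η ∧ HasPatternOrd v₀ v₁ η

/-- A pattern is initial if it is the pattern of `(v₀,v₀)` for some initial valuation `v₀`. -/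
def InitialPattern {k : ℕ} (η : PatSeq k) : Prop :=
  ∃ v₀ : Val k, IsVal v₀ ∧ Initial v₀ ∧ PatternOf v₀ v₀ η

/-- The equivalence `(v₀¹,v₁) ≈ (v₀²,v₂)`: same pattern and same integral parts. -/
def PairEquiv {k : ℕ} (va vb vc vd : Val k) : Prop :=
  (∃ η : PatSeq k, PatternOf va vb η ∧ PatternOf vc vd η) ∧
  intPart va = intPart vc ∧ intPart vb = intPart vd

/-! ## now-position, Next, next, reset -/

/-- The index of the now-position, i.e. the position containing `0¹`. -/
def nowIdx {k : ℕ} (η : PatSeq k) : ℕ :=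
  η.findIdx fun p => decide (((0 : Fin (k+1)), true) ∈ p)

/-- A merge-pattern: the now-position is the singleton `{0¹}`. -/
def IsMergePat {k : ℕ} (η : PatSeq k) : Prop :=
  η.getD (nowIdx η) ∅ = ({((0 : Fin (k+1)), true)} : Finset (Fin (k+1) × Bool))

/-- A split-pattern: a pattern that is not a merge-pattern. -/
def IsSplitPat {k : ℕ} (η : PatSeq k) : Prop := ¬ IsMergePat η

/-- The next pattern `Next(η)`. -/
def NextPat {k : ℕ} (η : PatSeq k) : PatSeq k :=
  let i := nowIdx η
  if η.getD i ∅ = ({((0 : Fin (k+1)), true)} : Finset (Fin (k+1) × Bool)) then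
    -- merge case : `p₀, …, p_{i-1} ∪ {0¹}, p_{i+1}, …, p_n`
    η.take (i-1) ++ [η.getD (i-1) ∅ ∪ {((0 : Fin (k+1)), true)}] ++ η.drop (i+1)
  else if i = 0 then
    -- split case with `i = 0` : `p₀ ∖ {0¹}, p₁, …, p_n, {0¹}`
    (η.getD 0 ∅ \ {((0 : Fin (k+1)), true)}) :: (η.drop 1 ++ [{((0 : Fin (k+1)), true)}])
  else
    -- split case with `i > 0` : `p₀, …, p_{i-1}, {0¹}, p_i ∖ {0¹}, p_{i+1}, …, p_n`
    η.take i ++ [{((0 : Fin (k+1)), true)}, η.getD i ∅ \ {((0 : Fin (k+1)), true)}]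
      ++ η.drop (i+1)

/-- The counter update of `next(η,u)`. -/
def nextD {k : ℕ} (η : PatSeq k) (u : DVal k) : DVal k :=
  let i := nowIdx η
  if η.getD i ∅ = ({((0 : Fin (k+1)), true)} : Finset (Fin (k+1) × Bool)) then
    fun j =>
      if j = 0 then (if i = 1 then u 0 + 1 else u 0)
      else (if (j, true) ∈ η.getD (i-1) ∅ then u j + 1 else u j)
  else u

/-- `next(η,u)`. -/
def nextPair {k : ℕ} (η : PatSeq k) (u : DVal k) : PatSeq k × DVal k :=
  (NextPat η, nextD η u)

/-- The pattern part of `reset_r(η,u)`: all indices `j¹`, `j ∈ r`, are moved into the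
now-position, and entries that become empty are deleted. -/
def ResetPat {k : ℕ} (r : Finset (Fin (k+1))) (η : PatSeq k) : PatSeq k :=
  let r1 : Finset (Fin (k+1) × Bool) := r.image (fun j => (j, true))
  let i := nowIdx η
  (η.mapIdx (fun m p => if m = i then p ∪ r1 else p \ r1)).filter (fun p => decide (p ≠ ∅))

/-- The counter update of `reset_r(η,u)`. -/
def resetD {k : ℕ} (r : Finset (Fin (k+1))) (u : DVal k) : DVal k :=
  fun j => if j ∈ r then 0 else u j

/-- `reset_r(η,u)`. -/
def resetPair {k : ℕ} (r : Finset (Fin (k+1))) (η : PatSeq k) (u : DVal k) :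
    PatSeq k × DVal k :=
  (ResetPat r η, resetD r u)

/-! ## Pattern changes -/

/-- `v` has no pattern change for `δ`. -/
def NoChange {k : ℕ} (v₀ v : Val k) (δ : ℝ) : Prop :=
  ∃ η : PatSeq k, PatternOf v₀ v η ∧
    ∀ δ', 0 ≤ δ' → δ' ≤ δ → PatternOf v₀ (shift v δ') η

/-- `v` has one pattern change for `δ`. -/
def OneChange {k : ℕ} (v₀ v : Val k) (δ : ℝ) : Prop :=
  ∃ η η' : PatSeq k, PatternOf v₀ v η ∧ PatternOf v₀ (shift v δ) η' ∧
    NextPat η = η' ∧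
    ((∀ δ', 0 < δ' → δ' < δ → PatternOf v₀ (shift v δ') η) ∨
     (∀ δ', 0 < δ' → δ' < δ → PatternOf v₀ (shift v δ') η'))

/-- `v` has `n` pattern changes for `δ` (for `n ≥ 1`): `δ = δ₁ + … + δ_n` with each
`δ_j > 0` and `v + δ₁ + … + δ_j` has one pattern change for `δ_{j+1}`. -/
def NChanges {k : ℕ} (v₀ v : Val k) (n : ℕ) (δ : ℝ) : Prop :=
  ∃ d : ℕ → ℝ, (∀ j < n, 0 < d j) ∧ (∑ j ∈ Finset.range n, d j) = δ ∧
    ∀ j < n, OneChange v₀ (shift v (∑ j' ∈ Finset.range j, d j')) (d j)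

/-! ## Clock constraints -/

/-- Comparison operators `<, ≤, =, ≥, >`. -/
inductive CCmp | lt | le | eq | ge | gt

/-- Evaluation of a comparison operator on reals. -/
def CCmp.evalR : CCmp → ℝ → ℝ → Prop
  | .lt, a, b => a < b
  | .le, a, b => a ≤ b
  | .eq, a, b => a = b
  | .ge, a, b => a ≥ b
  | .gt, a, b => a > b

/-- Clock constraints over the clocks `x_1, …, x_k` (indexed by `Fin k`, clock
`x_{i+1}` for `i : Fin k`): Boolean combinations of `x_i - x_j # d` and `x_i # d`. -/
inductive CC (k : ℕ)
  | diff (i j : Fin k) (op : CCmp) (d : ℕ) : CC k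
  | single (i : Fin k) (op : CCmp) (d : ℕ) : CC k
  | not (c : CC k) : CC k
  | and (c₁ c₂ : CC k) : CC k

/-- `v ∈ c` : the valuation `v` satisfies the clock constraint `c`. -/
def CC.sat {k : ℕ} (v : Val k) : CC k → Prop
  | .diff i j op d => op.evalR (v i.succ - v j.succ) (d : ℝ)
  | .single i op d => op.evalR (v i.succ) (d : ℝ)
  | .not c => ¬ c.sat v
  | .and c₁ c₂ => c₁.sat v ∧ c₂.sat v

/-- The position (in `η`) of an index `x ∈ K⁰ ∪ K¹`. -/
def posOf {k : ℕ} (η : PatSeq k) (x : Fin (k+1) × Bool) : ℕ :=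
  η.findIdx fun p => decide (x ∈ p)

/-- The truth value, given by pattern `η`, of the fractional ordering
`fract(x_a) > fract(x_b)`. -/
def fracGtP {k : ℕ} (η : PatSeq k) (a b : Fin (k+1)) : Prop :=
  let i := posOf η ((0 : Fin (k+1)), true)
  let m₁ := posOf η (a, true)
  let m₂ := posOf η (b, true)
  (m₁ < i ∧ i ≤ m₂) ∨ (m₂ < m₁ ∧ m₁ < i) ∨ (i ≤ m₂ ∧ m₂ < m₁)

/-- The truth value, given by pattern `η`, of `fract(x_a) = fract(x_b)`. -/
def fracEqP {k : ℕ} (η : PatSeq k) (a b : Fin (k+1)) : Prop :=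
  posOf η (a, true) = posOf η (b, true)

/-- The truth value, given by pattern `η`, of `fract(x_a) = 0`. -/
def fracZeroP {k : ℕ} (η : PatSeq k) (a : Fin (k+1)) : Prop :=
  posOf η (a, true) = posOf η ((0 : Fin (k+1)), true)

/-- `u ∈ c^η` : the discrete valuation `u` satisfies the constraint `c^η`, obtained by
rewriting `c` as `I(c)` over integral parts and fractional orderings and substituting the
truth values of the fractional orderings determined by the pattern `η`. -/
def CC.satP {k : ℕ} (η : PatSeq k) (u : DVal k) : CC k → Prop
  | .diff i j op d =>
      let I : ℤ := (u i.succ : ℤ) - (u j.succ : ℤ)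
      (match op with
      | .lt => I < d ∨ (I = d ∧ fracGtP η j.succ i.succ)
      | .le => I < d ∨ (I = d ∧ (fracGtP η j.succ i.succ ∨ fracEqP η i.succ j.succ))
      | .eq => I = d ∧ fracEqP η i.succ j.succ
      | .ge => I > d ∨ (I = d ∧ (fracGtP η i.succ j.succ ∨ fracEqP η i.succ j.succ))
      | .gt => I > d ∨ (I = d ∧ fracGtP η i.succ j.succ))
  | .single i op d =>
      let I : ℤ := (u i.succ : ℤ)
      (match op with
      | .lt => I < d
      | .le => I < d ∨ (I = d ∧ fracZeroP η i.succ)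
      | .eq => I = d ∧ fracZeroP η i.succ
      | .ge => I ≥ d
      | .gt => I > d ∨ (I = d ∧ ¬ fracZeroP η i.succ))
  | .not c => ¬ c.satP η u
  | .and c₁ c₂ => c₁.satP η u ∧ c₂.satP η u

/-! ## Pushdown timed automata -/

/-- A pushdown timed automaton `⟨S, {x₁,…,x_k}, Inv, R, Γ, PD⟩`:
`Inv` assigns an invariant to each state, `R s s' = (Rc s s', Rr s s')` assigns a reset
condition and a set of clock resets (a subset of `K⁺`) to each edge, and
`PD s s' = (PDa s s', PDw s s')` assigns a stack operation to each edge. -/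
structure PTA (k : ℕ) (S : Type) (Γ : Type) where
  Inv : S → CC k
  Rc : S → S → CC k
  Rr : S → S → Finset (Fin (k+1))
  hRr : ∀ s s', (0 : Fin (k+1)) ∉ Rr s s'
  PDa : S → S → Γ
  PDw : S → S → List Γ

/-- A configuration `(s, v, w)` of a PTA. -/
abbrev Config (k : ℕ) (S Γ : Type) := S × Val k × List Γ

/-- The one-step transition relation `→_A` of a PTA. -/
def Step {k : ℕ} {S Γ : Type} (A : PTA k S Γ) (c₁ c₂ : Config k S Γ) : Prop :=
  -- progress transition
  (c₁.1 = c₂.1 ∧ c₁.2.2 = c₂.2.2 ∧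
    ∃ δ : ℝ, 0 < δ ∧ c₂.2.1 = shift c₁.2.1 δ ∧
      ∀ δ', 0 ≤ δ' → δ' ≤ δ → (A.Inv c₁.1).sat (shift c₁.2.1 δ')) ∨
  -- reset transition
  ((A.Inv c₁.1).sat c₁.2.1 ∧ (A.Rc c₁.1 c₂.1).sat c₁.2.1 ∧
    c₂.2.1 = resetVal (A.Rr c₁.1 c₂.1) c₁.2.1 ∧ (A.Inv c₂.1).sat c₂.2.1 ∧
    ∃ w : List Γ, c₁.2.2 = A.PDa c₁.1 c₂.1 :: w ∧ c₂.2.2 = A.PDw c₁.1 c₂.1 ++ w)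

/-- `→*_A`, the transitive closure of `→_A`. -/
def Reach {k : ℕ} {S Γ : Type} (A : PTA k S Γ) : Config k S Γ → Config k S Γ → Prop :=
  Relation.TransGen (Step A)

/-- `(s₀,u₀,w₀) →*_{A,η} (s₁,u₁,w₁)`. -/
def ReachPat {k : ℕ} {S Γ : Type} (A : PTA k S Γ) (η : PatSeq k)
    (s₀ : S) (u₀ : DVal k) (w₀ : List Γ) (s₁ : S) (u₁ : DVal k) (w₁ : List Γ) : Prop :=
  ∃ v₀ v₁ : Val k, IsVal v₀ ∧ IsVal v₁ ∧ v₀ 0 = 0 ∧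
    intPart v₀ = u₀ ∧ intPart v₁ = u₁ ∧ PatternOf v₀ v₁ η ∧
    Reach A (s₀, v₀, w₀) (s₁, v₁, w₁)

/-! ## The pattern graph -/

/-- A configuration `(s, η, u, w)` of the pattern graph. -/
abbrev GConfig (k : ℕ) (S Γ : Type) := S × PatSeq k × DVal k × List Γ

/-- The one-step transition relation `→_G` of the pattern graph `G` of a PTA `A`,
through progress edges, stay edges and reset edges. -/
def GStep {k : ℕ} {S Γ : Type} (A : PTA k S Γ) (c₁ c₂ : GConfig k S Γ) : Prop :=
  -- progress edge
  (c₁.1 = c₂.1 ∧ c₁.2.2.2 = c₂.2.2.2 ∧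
    nextPair c₁.2.1 c₁.2.2.1 = (c₂.2.1, c₂.2.2.1) ∧
    (A.Inv c₁.1).satP c₁.2.1 c₁.2.2.1 ∧ (A.Inv c₁.1).satP c₂.2.1 c₂.2.2.1) ∨
  -- stay edge
  (c₁ = c₂ ∧ IsMergePat c₁.2.1 ∧ (A.Inv c₁.1).satP c₁.2.1 c₁.2.2.1) ∨
  -- reset edge
  (resetPair (A.Rr c₁.1 c₂.1) c₁.2.1 c₁.2.2.1 = (c₂.2.1, c₂.2.2.1) ∧
    ((A.Rc c₁.1 c₂.1).and (A.Inv c₁.1)).satP c₁.2.1 c₁.2.2.1 ∧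
    (A.Inv c₂.1).satP c₂.2.1 c₂.2.2.1 ∧
    ∃ w : List Γ, c₁.2.2.2 = A.PDa c₁.1 c₂.1 :: w ∧ c₂.2.2.2 = A.PDw c₁.1 c₂.1 ++ w)

/-- `→*_G`, the transitive closure of `→_G`. -/
def GReach {k : ℕ} {S Γ : Type} (A : PTA k S Γ) : GConfig k S Γ → GConfig k S Γ → Prop :=
  Relation.TransGen (GStep A)

end PTApaper
namespace PTApaper

noncomputable def rf {k : ℕ} (v₀ v : Val k) (x : Fin (k+1) × Bool) : ℝ :=
  relFract (bval v₀ v x.2) x.1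

lemma patternOf_iff {k : ℕ} (v₀ v : Val k) (η : PatSeq k) :
    PatternOf v₀ v η ↔ IsPattern η ∧ (∀ p ∈ η, ∀ x ∈ p, ∀ y ∈ p, rf v₀ v x = rf v₀ v y) ∧
      η.Pairwise (fun p q => ∀ x ∈ p, ∀ y ∈ q, rf v₀ v x < rf v₀ v y) := by
  unfold PatternOf
  refine and_congr_right fun hP => ?_
  constructor
  · intro h
    constructor
    · intro p hp x hx y hy
      obtain ⟨m, rfl⟩ := List.get_of_mem hp
      exact (h m m x.2 y.2 x.1 y.1 hx hy).1.2 rfl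
    · rw [List.pairwise_iff_get]
      intro m m' hm x hx y hy
      exact (h m m' x.2 y.2 x.1 y.1 hx hy).2.2 hm
  · rintro ⟨h1, h2⟩ m m' b b' i i' hi hi'
    rw [List.pairwise_iff_get] at h2
    have e : m = m' → rf v₀ v (i,b) = rf v₀ v (i',b') := by
      rintro rfl
      exact h1 _ (List.get_mem _ _) _ hi _ hi'
    have l : m < m' → rf v₀ v (i,b) < rf v₀ v (i',b') := fun hm => h2 m m' hm _ hi _ hi'
    have g : m' < m → rf v₀ v (i',b') < rf v₀ v (i,b) := fun hm => h2 m' m hm _ hi' _ hi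
    change (rf v₀ v (i,b) = rf v₀ v (i',b') ↔ _) ∧ (rf v₀ v (i,b) < rf v₀ v (i',b') ↔ m < m')
    rcases lt_trichotomy m m' with hm | hm | hm
    · have := l hm
      exact ⟨⟨fun hh => absurd hh this.ne, fun hh => absurd hh hm.ne⟩, ⟨fun _ => hm, fun _ => this⟩⟩
    · have := e hm
      exact ⟨⟨fun _ => hm, fun _ => this⟩, ⟨fun hh => absurd this hh.ne, fun hh => absurd hm hh.ne⟩⟩
    · have := g hm
      exact ⟨⟨fun hh => absurd hh this.ne', fun hh => absurd hh hm.ne'⟩,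
        ⟨fun hh => absurd hh this.not_gt, fun hh => absurd hh hm.not_gt⟩⟩

lemma pat_mem {k : ℕ} {v₀ v : Val k} {η₁ η₂ : PatSeq k}
    (h1 : PatternOf v₀ v η₁) (h2 : PatternOf v₀ v η₂) {p} (hp : p ∈ η₁) : p ∈ η₂ := by
  rw [patternOf_iff] at h1 h2
  obtain ⟨⟨_, n1, _, _, c1⟩, e1, l1⟩ := h1
  obtain ⟨⟨_, n2, _, _, c2⟩, e2, l2⟩ := h2
  have key : ∀ (η : PatSeq k), (η.Pairwise (fun p q => ∀ x ∈ p, ∀ y ∈ q, rf v₀ v x < rf v₀ v y)) →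
      (∀ x : Fin (k+1) × Bool, ∃ p ∈ η, x ∈ p) →
      ∀ p ∈ η, ∀ x ∈ p, ∀ y, rf v₀ v x = rf v₀ v y → y ∈ p := by
    intro η l c p hp x hx y hxy
    obtain ⟨q, hq, hy⟩ := c y
    obtain ⟨m, rfl⟩ := List.get_of_mem hp
    obtain ⟨m', rfl⟩ := List.get_of_mem hq
    rw [List.pairwise_iff_get] at l
    rcases lt_trichotomy m m' with hm | hm | hm
    · exact absurd hxy (l m m' hm _ hx _ hy).ne
    · rw [hm]; exact hy
    · exact absurd hxy (l m' m hm _ hy _ hx).ne'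
  obtain ⟨x, hx⟩ := n1 p hp
  obtain ⟨q, hq, hxq⟩ := c2 x
  have : p = q := by
    ext y
    exact ⟨fun hy => key _ l2 c2 q hq x hxq y (e1 p hp x hx y hy),
      fun hy => key _ l1 c1 p hp x hx y (e2 q hq x hxq y hy)⟩
  rw [this]; exact hq

lemma pat_unique {k : ℕ} {v₀ v : Val k} {η₁ η₂ : PatSeq k}
    (h1 : PatternOf v₀ v η₁) (h2 : PatternOf v₀ v η₂) : η₁ = η₂ := by
  have nd : ∀ η : PatSeq k, PatternOf v₀ v η → η.Nodup := by
    intro η h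
    rw [patternOf_iff] at h
    refine h.2.2.imp_of_mem ?_
    rintro p q hp hq hlt rfl
    obtain ⟨x, hx⟩ := h.1.2.1 p hp
    exact lt_irrefl _ (hlt x hx x hx)
  have hperm : η₁.Perm η₂ := (List.perm_ext_iff_of_nodup (nd _ h1) (nd _ h2)).2
    fun p => ⟨fun h => pat_mem h1 h2 h, fun h => pat_mem h2 h1 h⟩
  refine List.Perm.eq_of_pairwise ?_ ((patternOf_iff _ _ _).1 h1).2.2 ((patternOf_iff _ _ _).1 h2).2.2 hperm
  intro a b ha hb hab hba
  obtain ⟨x, hx⟩ := h1.1.2.1 a ha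
  obtain ⟨y, hy⟩ := h2.1.2.1 b hb
  exact absurd (hab x hx y hy) (hba y hy x hx).not_gt

/-- the moving point -/
noncomputable def tm {k : ℕ} (v : Val k) (d : ℝ) : ℝ := Int.fract (-(v 0 + d))

lemma rf_Z {k : ℕ} (v₀ v : Val k) (d : ℝ) : rf v₀ (shift v d) (0, true) = tm v d := by
  simp only [rf, bval, relFract, shift, tm, if_true]
  rw [Int.fract_eq_fract]
  exact ⟨1 + ⌊v 0 + d⌋, by rw [Int.fract]; push_cast; ring⟩

lemma rf_zero {k : ℕ} (v₀ v : Val k) (h0 : Initial v₀) : rf v₀ v (0, false) = 0 := by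
  have h : v₀ 0 = 0 := h0
  simp [rf, bval, relFract, h]

lemma rf_pos {k : ℕ} (v₀ v : Val k) (j : Fin (k+1)) (hj : j ≠ 0) :
    rf v₀ v (j, true) = Int.fract (v j - v 0) := by
  simp only [rf, bval, relFract, hj, if_false]
  rw [Int.fract_eq_fract]
  exact ⟨-⌊v j⌋ + 1 + ⌊v 0⌋ - ⌊1 - Int.fract (v 0)⌋, by
    have e1 := Int.self_sub_floor (1 - Int.fract (v 0))
    have e2 := Int.self_sub_floor (v j)
    have e3 := Int.self_sub_floor (v 0)
    push_cast; linarith⟩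

lemma rf_shift {k : ℕ} (v₀ v : Val k) (d : ℝ) (x : Fin (k+1) × Bool) (hx : x ≠ (0, true)) :
    rf v₀ (shift v d) x = rf v₀ v x := by
  rcases x with ⟨j, _ | _⟩
  · rfl
  · have : j ≠ 0 := by rintro rfl; exact hx rfl
    rw [rf_pos _ _ _ this, rf_pos _ _ _ this]
    simp [shift]

lemma shift_zero' {k : ℕ} (v : Val k) : shift v 0 = v := by
  funext i; simp [shift]

def xj {k : ℕ} (j : Fin (k+1)) : Fin (k+1) × Bool := if j = 0 then (0, false) else (j, true)

lemma xj_ne {k : ℕ} (j : Fin (k+1)) : xj j ≠ (0, true) := by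
  unfold xj; split_ifs with h <;> simp [h]

lemma hit_iff {k : ℕ} (v₀ v : Val k) (h0 : Initial v₀) (d : ℝ) (j : Fin (k+1)) :
    (∃ n : ℤ, v j + d = n) ↔ tm v d = rf v₀ v (xj j) := by
  unfold xj
  split_ifs with h
  · subst h
    rw [rf_zero _ _ h0, tm, Int.fract_eq_zero_iff]
    constructor
    · rintro ⟨n, hn⟩; exact ⟨-n, by rw [hn]; push_cast; ring⟩
    · rintro ⟨n, hn⟩; exact ⟨-n, by push_cast; linarith⟩
  · rw [rf_pos _ _ _ h, tm, Int.fract_eq_fract]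
    constructor
    · rintro ⟨n, hn⟩; exact ⟨-n, by push_cast; linarith⟩
    · rintro ⟨n, hn⟩; exact ⟨-n, by push_cast; linarith⟩

lemma tm_eq {k : ℕ} (v : Val k) (d : ℝ) (n : ℤ) (h1 : n < v 0 + d) (h2 : v 0 + d ≤ n + 1) :
    tm v d = n + 1 - (v 0 + d) := by
  rw [tm, Int.fract_eq_iff]
  refine ⟨by linarith, by linarith, -(n+1), by push_cast; ring⟩

lemma tm_ne_const {k : ℕ} (v : Val k) (δ c : ℝ) (hδ : 0 < δ)
    (h : ∀ d, 0 < d → d < δ → tm v d = c) : False := by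
  have hm : 0 < min δ 1 := lt_min hδ one_pos
  have hm1 : min δ 1 ≤ 1 := min_le_right _ _
  have hm2 : min δ 1 ≤ δ := min_le_left _ _
  generalize min δ 1 = m at *
  have a1 := h (m/2) (by linarith) (by linarith)
  have a2 := h (m/3) (by linarith) (by linarith)
  rw [← a2, tm, tm, Int.fract_eq_fract] at a1
  obtain ⟨z, hz⟩ := a1
  have e1 : (z:ℝ) < 0 := by linarith
  have e2 : (-1:ℝ) < z := by linarith
  norm_cast at e1 e2
  omega

lemma floor_hit (a δ : ℝ) (hδ : 0 < δ) (h : ∀ d, 0 < d → d < δ → ¬ ∃ n : ℤ, a + d = n) :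
    ((∃ n : ℤ, a + δ = n) → ⌊a + δ⌋ = ⌊a⌋ + 1) ∧ ((¬ ∃ n : ℤ, a + δ = n) → ⌊a + δ⌋ = ⌊a⌋) := by
  have hle : a + δ ≤ ⌊a⌋ + 1 := by
    by_contra hc
    exact h (⌊a⌋ + 1 - a) (by linarith [Int.lt_floor_add_one a]) (by linarith)
      ⟨⌊a⌋ + 1, by push_cast; ring⟩
  have hge := Int.floor_le a
  refine ⟨fun hn => ?_, fun hn => ?_⟩
  · obtain ⟨n, hn⟩ := hn
    have e1 : ((⌊a⌋ : ℤ) : ℝ) < n := by linarith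
    have e2 : (n : ℝ) ≤ ((⌊a⌋ + 1 : ℤ) : ℝ) := by push_cast; linarith
    norm_cast at e1 e2
    rw [hn, Int.floor_intCast]; omega
  · rw [Int.floor_eq_iff]
    refine ⟨by linarith, lt_of_le_of_ne hle fun hh => hn ⟨⌊a⌋ + 1, by push_cast; exact hh⟩⟩

lemma pat_transfer {k : ℕ} {v₀ v : Val k} {η : PatSeq k} {d e : ℝ}
    (h : PatternOf v₀ (shift v d) η)
    (hlt : ∀ x, x ≠ (0, true) → (rf v₀ v x < tm v d ∧ rf v₀ v x < tm v e) ∨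
      (tm v d < rf v₀ v x ∧ tm v e < rf v₀ v x)) :
    PatternOf v₀ (shift v e) η := by
  rw [patternOf_iff] at h ⊢
  have A : ∀ x y, rf v₀ (shift v d) x < rf v₀ (shift v d) y →
      rf v₀ (shift v e) x < rf v₀ (shift v e) y := by
    intro x y hxy
    by_cases hx : x = (0, true) <;> by_cases hy : y = (0, true)
    · subst hx hy; exact absurd hxy (lt_irrefl _)
    · subst hx
      rw [rf_Z, rf_shift _ _ _ _ hy] at *
      rcases hlt y hy with h | h
      · linarith [h.1]
      · exact h.2
    · subst hy
      rw [rf_Z, rf_shift _ _ _ _ hx] at *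
      rcases hlt x hx with h | h
      · exact h.2
      · linarith [h.1]
    · rw [rf_shift _ _ _ _ hx, rf_shift _ _ _ _ hy] at *; exact hxy
  have B : ∀ x y, rf v₀ (shift v d) x = rf v₀ (shift v d) y →
      rf v₀ (shift v e) x = rf v₀ (shift v e) y := by
    intro x y hxy
    by_cases hx : x = (0, true) <;> by_cases hy : y = (0, true)
    · rw [hx, hy]
    · subst hx
      rw [rf_Z, rf_shift _ _ _ _ hy] at *
      rcases hlt y hy with h | h <;> linarith [h.1]
    · subst hy
      rw [rf_Z, rf_shift _ _ _ _ hx] at *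
      rcases hlt x hx with h | h <;> linarith [h.1]
    · rw [rf_shift _ _ _ _ hx, rf_shift _ _ _ _ hy] at *; exact hxy
  refine ⟨h.1, fun p hp x hx y hy => B _ _ (h.2.1 p hp x hx y hy), ?_⟩
  exact h.2.2.imp fun hpq x hx y hy => A _ _ (hpq x hx y hy)

/-- same position -/
lemma pat_eq {k : ℕ} {v₀ v : Val k} {η : PatSeq k} (h : PatternOf v₀ v η) {p} (hp : p ∈ η)
    {x y} (hx : x ∈ p) (hy : y ∈ p) : rf v₀ v x = rf v₀ v y :=
  ((patternOf_iff _ _ _).1 h).2.1 p hp x hx y hy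

lemma pat_lt {k : ℕ} {v₀ v : Val k} {A B : PatSeq k} (h : PatternOf v₀ v (A ++ B)) {p q}
    (hp : p ∈ A) (hq : q ∈ B)
    {x y} (hx : x ∈ p) (hy : y ∈ q) : rf v₀ v x < rf v₀ v y :=
  (List.pairwise_append.1 ((patternOf_iff _ _ _).1 h).2.2).2.2 p hp q hq x hx y hy

lemma nowIdx_eq {k : ℕ} (A B : PatSeq k) (p) (hA : ∀ q ∈ A, ((0 : Fin (k+1)), true) ∉ q)
    (hp : ((0 : Fin (k+1)), true) ∈ p) : nowIdx (A ++ p :: B) = A.length := by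
  unfold nowIdx
  rw [List.findIdx_append, List.findIdx_eq_length_of_false (by simpa using hA)]
  simp [List.findIdx_cons, hp]

lemma decomp {k : ℕ} (η : PatSeq k) (h : IsPattern η) : ∃ A p B, η = A ++ p :: B ∧
    ((0 : Fin (k+1)), true) ∈ p ∧ (∀ q ∈ A, ((0 : Fin (k+1)), true) ∉ q) ∧
    (∀ q ∈ B, ((0 : Fin (k+1)), true) ∉ q) := by
  obtain ⟨_, _, hd, _, hc⟩ := h
  obtain ⟨p, hp, hz⟩ := hc (0, true)
  obtain ⟨A, B, rfl⟩ := List.append_of_mem hp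
  rw [List.pairwise_append, List.pairwise_cons] at hd
  refine ⟨A, p, B, rfl, hz, fun q hq hzq => ?_, fun q hq hzq => ?_⟩
  · exact Finset.disjoint_left.1 (hd.2.2 q hq p (by simp)) hzq hz
  · exact Finset.disjoint_left.1 (hd.2.1.1 q hq) hz hzq


lemma head_case {k : ℕ} {A B : PatSeq k} {p} (h : IsPattern (A ++ p :: B)) :
    (A = [] ∧ ((0 : Fin (k+1)), false) ∈ p) ∨
    ∃ q A', A = q :: A' ∧ ((0 : Fin (k+1)), false) ∈ q := by
  have := h.2.2.2.1
  rcases A with _ | ⟨q, A'⟩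
  · left; simpa using this
  · right; exact ⟨q, A', rfl, by simpa using this⟩

lemma next_merge {k : ℕ} (A B : PatSeq k) (q)
    (hA : ∀ r ∈ A, ((0 : Fin (k+1)), true) ∉ r) (hq : ((0 : Fin (k+1)), true) ∉ q) :
    NextPat (A ++ q :: {(0, true)} :: B) = A ++ (q ∪ {(0, true)}) :: B := by
  have hi : nowIdx (A ++ q :: {(0, true)} :: B) = A.length + 1 := by
    have := nowIdx_eq (A ++ [q]) B {(0, true)} (by
      intro r hr
      rcases List.mem_append.1 hr with h | h
      · exact hA r h
      · rw [List.mem_singleton.1 h]; exact hq) (by simp)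
    simpa using this
  unfold NextPat
  simp only [hi]
  have e : A.length + 1 + 1 - A.length = 2 := by omega
  simp [List.drop_append, e]
  omega

lemma nextD_merge {k : ℕ} (A B : PatSeq k) (q)
    (hA : ∀ r ∈ A, ((0 : Fin (k+1)), true) ∉ r) (hq : ((0 : Fin (k+1)), true) ∉ q)
    (hP : IsPattern (A ++ q :: {(0, true)} :: B)) (u : DVal k) (j : Fin (k+1)) :
    nextD (A ++ q :: {(0, true)} :: B) u j = if xj j ∈ q then u j + 1 else u j := by
  have hi : nowIdx (A ++ q :: {(0, true)} :: B) = A.length + 1 := by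
    have := nowIdx_eq (A ++ [q]) B {(0, true)} (by
      intro r hr
      rcases List.mem_append.1 hr with h | h
      · exact hA r h
      · rw [List.mem_singleton.1 h]; exact hq) (by simp)
    simpa using this
  have h0 : ((0 : Fin (k+1)), false) ∈ q ↔ A = [] := by
    rcases head_case hP with h | ⟨r, A', rfl, h⟩
    · simp [h]
    · simp only [reduceCtorEq, iff_false]
      intro h'
      have hd := hP.2.2.1
      rw [List.pairwise_append] at hd
      exact Finset.disjoint_left.1 (hd.2.2 r (by simp) q (by simp)) h h'
  unfold nextD
  simp only [hi]
  by_cases hj : j = 0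
  · subst hj
    simp [List.getD_append_right, xj, h0]
  · simp [List.getD_append_right, xj, hj]

lemma next_split0 {k : ℕ} (B : PatSeq k) (p)
    (hp : ((0 : Fin (k+1)), true) ∈ p) (hne : p ≠ {(0, true)}) :
    NextPat (p :: B) = ((p \ {(0, true)}) :: B) ++ [{(0, true)}] := by
  have hi := nowIdx_eq [] B p (by simp) hp
  simp only [List.nil_append, List.length_nil] at hi
  unfold NextPat
  simp only [hi]
  simp [hne]

lemma next_split {k : ℕ} (A B : PatSeq k) (p) (hA : ∀ r ∈ A, ((0 : Fin (k+1)), true) ∉ r)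
    (hp : ((0 : Fin (k+1)), true) ∈ p) (hne : p ≠ {(0, true)}) (hA0 : A ≠ []) :
    NextPat (A ++ p :: B) = A ++ {(0, true)} :: (p \ {(0, true)}) :: B := by
  have hi := nowIdx_eq A B p hA hp
  unfold NextPat
  simp only [hi]
  simp [hne, hA0, List.getD_append_right, List.drop_append]

lemma nextD_split {k : ℕ} (A B : PatSeq k) (p) (hA : ∀ r ∈ A, ((0 : Fin (k+1)), true) ∉ r)
    (hp : ((0 : Fin (k+1)), true) ∈ p) (hne : p ≠ {(0, true)}) (u : DVal k) :
    nextD (A ++ p :: B) u = u := by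
  have hi := nowIdx_eq A B p hA hp
  unfold nextD
  simp only [hi]
  simp [hne, List.getD_append_right]

lemma int_eq {k : ℕ} {v : Val k} (hv : IsVal v) {δ : ℝ} (hδ : 0 < δ) (j : Fin (k+1)) :
    ((intPart (shift v δ) j : ℕ) : ℤ) = ⌊v j + δ⌋ ∧ ((intPart v j : ℕ) : ℤ) = ⌊v j⌋ := by
  have := hv j
  constructor
  · exact Int.toNat_of_nonneg (Int.floor_nonneg.2 (by simp only [shift]; linarith))
  · exact Int.toNat_of_nonneg (Int.floor_nonneg.2 (hv j))

/-- an isolated moving point never meets a fixed one -/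
lemma tm_zero_int {k : ℕ} (v : Val k) (d : ℝ) : tm v d = 0 ↔ ((⌊v 0 + d⌋ : ℤ) : ℝ) = v 0 + d := by
  rw [tm, Int.fract_eq_zero_iff]
  constructor
  · rintro ⟨n, hn⟩
    have : v 0 + d = ((-n : ℤ) : ℝ) := by push_cast; linarith
    rw [this, Int.floor_intCast]
  · intro h; exact ⟨-⌊v 0 + d⌋, by push_cast; linarith⟩

theorem merge_case {k : ℕ} {v₀ v : Val k}
    (hv : IsVal v) (h0 : Initial v₀) {δ : ℝ} (hδ : 0 < δ) (A B : PatSeq k) (q)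
    (hA : ∀ r ∈ A, ((0 : Fin (k+1)), true) ∉ r) (hq : ((0 : Fin (k+1)), true) ∉ q)
    (hB : ∀ r ∈ B, ((0 : Fin (k+1)), true) ∉ r)
    (hη : PatternOf v₀ (shift v 0) (A ++ q :: {(0, true)} :: B))
    (hη' : PatternOf v₀ (shift v δ) (A ++ (q ∪ {(0, true)}) :: B)) :
    nextD (A ++ q :: {(0, true)} :: B) (intPart v) = intPart (shift v δ) ↔
    ((∀ d, 0 < d → d < δ → PatternOf v₀ (shift v d) (A ++ q :: {(0, true)} :: B)) ∨
     (∀ d, 0 < d → d < δ → PatternOf v₀ (shift v d) (A ++ (q ∪ {(0, true)}) :: B))) := by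
  obtain ⟨y, hy⟩ := hη.1.2.1 q (by simp)
  have hyZ : y ≠ (0, true) := by rintro rfl; exact hq hy
  have hqe : ∀ {d}, PatternOf v₀ (shift v d) (A ++ (q ∪ {(0, true)}) :: B) → ∀ x ∈ q,
      rf v₀ v x = tm v d := by
    intro d h x hx
    have hxZ : x ≠ (0, true) := by rintro rfl; exact hq hx
    have := pat_eq h (p := q ∪ {(0, true)}) (by simp) (x := x) (y := (0, true)) (by simp [hx]) (by simp)
    rwa [rf_Z, rf_shift _ _ _ _ hxZ] at this
  have hmlt : ∀ {d}, PatternOf v₀ (shift v d) (A ++ q :: {(0, true)} :: B) →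
      ∀ r, r ∈ A ∨ r = q → ∀ x ∈ r, rf v₀ v x < tm v d := by
    intro d h r hr x hx
    have hxZ : x ≠ (0, true) := by
      rintro rfl
      rcases hr with hr | rfl
      · exact hA r hr hx
      · exact hq hx
    rw [show A ++ q :: {(0, true)} :: B = (A ++ [q]) ++ {(0, true)} :: B by simp] at h
    have := pat_lt h (p := r) (q := {(0, true)}) (by simpa using hr) (by simp) hx
      (y := (0, true)) (by simp)
    rwa [rf_Z, rf_shift _ _ _ _ hxZ] at this
  have hmgt : ∀ {d}, PatternOf v₀ (shift v d) (A ++ q :: {(0, true)} :: B) →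
      ∀ r ∈ B, ∀ x ∈ r, tm v d < rf v₀ v x := by
    intro d h r hr x hx
    have hxZ : x ≠ (0, true) := by
      rintro rfl
      exact hB r hr hx
    rw [show A ++ q :: {(0, true)} :: B = (A ++ [q, {(0, true)}]) ++ B by simp] at h
    have := pat_lt h (p := {(0, true)}) (q := r) (by simp) hr (x := (0, true)) (by simp) hx
    rwa [rf_Z, rf_shift _ _ _ _ hxZ] at this
  have hAq : ∀ r ∈ A, ∀ x ∈ r, rf v₀ v x < tm v δ := by
    intro r hr x hx
    have hxZ : x ≠ (0, true) := by rintro rfl; exact hA r hr hx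
    have := pat_lt hη' (p := r) (q := q ∪ {(0, true)}) hr (by simp) hx
      (y := (0, true)) (by simp)
    rwa [rf_Z, rf_shift _ _ _ _ hxZ] at this
  have hBq : ∀ r ∈ B, ∀ x ∈ r, tm v δ < rf v₀ v x := by
    intro r hr x hx
    have hxZ : x ≠ (0, true) := by rintro rfl; exact hB r hr hx
    rw [show A ++ (q ∪ {(0, true)}) :: B = (A ++ [q ∪ {(0, true)}]) ++ B by simp] at hη'
    have := pat_lt hη' (p := q ∪ {(0, true)}) (q := r) (by simp) hr (x := (0, true)) (by simp) hx
    rwa [rf_Z, rf_shift _ _ _ _ hxZ] at this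
  have hcov : ∀ x, x ≠ (0, true) → (∃ r ∈ A, x ∈ r) ∨ x ∈ q ∨ (∃ r ∈ B, x ∈ r) := by
    intro x hx
    obtain ⟨r, hr, hxr⟩ := hη.1.2.2.2.2 x
    simp only [List.mem_append, List.mem_cons] at hr
    rcases hr with h | rfl | rfl | h
    · exact Or.inl ⟨r, h, hxr⟩
    · exact Or.inr (Or.inl hxr)
    · exact absurd (Finset.mem_singleton.1 hxr) hx
    · exact Or.inr (Or.inr ⟨r, h, hxr⟩)
  have hmem : ∀ x, x ≠ (0, true) → (tm v δ = rf v₀ v x ↔ x ∈ q) := by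
    intro x hx
    refine ⟨fun h => ?_, fun h => (hqe hη' x h).symm⟩
    rcases hcov x hx with ⟨r, hr, hxr⟩ | h' | ⟨r, hr, hxr⟩
    · exact absurd h (hAq r hr x hxr).ne'
    · exact h'
    · exact absurd h (hBq r hr x hxr).ne
  constructor
  · intro hD
    left
    have hD0 := congrFun hD 0
    rw [nextD_merge A B q hA hq hη.1] at hD0
    obtain ⟨i1, i2⟩ := int_eq hv hδ 0
    have hz0 := hmem (xj 0) (xj_ne 0)
    have hr0 : rf v₀ v (xj 0) = 0 := by simp [xj, rf_zero _ _ h0]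
    rw [hr0] at hz0
    -- `v 0` is not an integer
    have htpos : 0 < tm v 0 := by
      refine (rf_zero v₀ v h0).symm.trans_lt ?_
      rcases head_case (A := A ++ [q]) (p := {(0, true)}) (B := B) (by simpa using hη.1) with h | ⟨r, A', hr, h⟩
      · simp at h
      · have : r ∈ A ++ [q] := by rw [hr]; simp
        exact hmlt hη r (by simpa using this) _ h
    have hNlt : ((⌊v 0⌋ : ℤ) : ℝ) < v 0 := by
      refine lt_of_le_of_ne (Int.floor_le _) fun h => htpos.ne' ?_
      rw [tm_zero_int]; simpa using h
    have hle : v 0 + δ ≤ ⌊v 0⌋ + 1 := by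
      split_ifs at hD0 with hx
      · have e := (tm_zero_int v δ).1 (hz0.2 hx)
        have : ⌊v 0 + δ⌋ = ⌊v 0⌋ + 1 := by omega
        rw [← e, this]; push_cast; exact le_rfl
      · have : ⌊v 0 + δ⌋ = ⌊v 0⌋ := by omega
        rw [← this]; exact (Int.lt_floor_add_one _).le
    have ht : ∀ d, 0 ≤ d → d ≤ δ → tm v d = ⌊v 0⌋ + 1 - (v 0 + d) := fun d h1 h2 =>
      tm_eq v d _ (by linarith) (by linarith)
    intro d hd1 hd2
    refine pat_transfer hη fun x hx => ?_
    have t0 := ht 0 le_rfl hδ.le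
    have t1 := ht d hd1.le hd2.le
    have t2 := ht δ hδ.le le_rfl
    rcases hcov x hx with ⟨r, hr, hxr⟩ | h' | ⟨r, hr, hxr⟩
    · have := hAq r hr x hxr
      left; constructor <;> linarith
    · have := hqe hη' x h'
      left; constructor <;> linarith
    · have := hmgt hη r hr x hxr
      right; constructor <;> linarith
  · rintro (h | h)
    · funext j
      rw [nextD_merge A B q hA hq hη.1]
      obtain ⟨i1, i2⟩ := int_eq hv hδ j
      have hf := floor_hit (v j) δ hδ (by
        intro d hd1 hd2 hh
        rw [hit_iff v₀ v h0] at hh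
        rcases hcov (xj j) (xj_ne j) with ⟨r, hr, hxr⟩ | h' | ⟨r, hr, hxr⟩
        · exact absurd hh (hmlt (h d hd1 hd2) r (Or.inl hr) _ hxr).ne'
        · exact absurd hh (hmlt (h d hd1 hd2) q (Or.inr rfl) _ h').ne'
        · exact absurd hh (hmgt (h d hd1 hd2) r hr _ hxr).ne)
      simp only [hit_iff v₀ v h0, hmem _ (xj_ne j)] at hf
      split_ifs with hx
      · have := hf.1 hx
        omega
      · have := hf.2 hx
        omega
    · exact (tm_ne_const v δ (rf v₀ v y) hδ
        fun d h1 h2 => (hqe (h d h1 h2) y hy).symm).elim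

/-- common part of the two split cases -/
theorem split_back {k : ℕ} {v₀ v : Val k}
    (hv : IsVal v) (h0 : Initial v₀) {δ : ℝ} (hδ : 0 < δ) (p : Finset (Fin (k+1) × Bool))
    (hp : ((0 : Fin (k+1)), true) ∈ p) (hne : p ≠ {(0, true)})
    (η η' : PatSeq k) (hpη : p ∈ η) (hs : {(0, true)} ∈ η')
    (hη : PatternOf v₀ (shift v 0) η) (hη' : PatternOf v₀ (shift v δ) η')
    (h : (∀ d, 0 < d → d < δ → PatternOf v₀ (shift v d) η) ∨
     (∀ d, 0 < d → d < δ → PatternOf v₀ (shift v d) η')) :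
    intPart v = intPart (shift v δ) := by
  obtain ⟨y, hy, hyZ⟩ : ∃ y ∈ p, y ≠ (0, true) := by
    by_contra hc
    push Not at hc
    exact hne (Finset.eq_singleton_iff_unique_mem.2 ⟨hp, hc⟩)
  have e1 : ∀ {d}, PatternOf v₀ (shift v d) η → tm v d = rf v₀ v y := by
    intro d h
    have := pat_eq h hpη hp hy
    rwa [rf_Z, rf_shift _ _ _ _ hyZ] at this
  have e2 : ∀ {d}, PatternOf v₀ (shift v d) η' → ∀ x, x ≠ (0, true) → tm v d ≠ rf v₀ v x := by
    intro d h x hx he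
    obtain ⟨r, hr, hxr⟩ := h.1.2.2.2.2 x
    obtain ⟨m, hm⟩ := List.get_of_mem hs
    obtain ⟨m', hm'⟩ := List.get_of_mem hr
    have := ((h.2 m m' true x.2 0 x.1 (by rw [hm]; simp) (by rw [hm']; exact hxr)).1).1
      (by
        change rf v₀ (shift v d) (0, true) = rf v₀ (shift v d) x
        rw [rf_Z, rf_shift _ _ _ _ hx]; exact he)
    rw [this, hm'] at hm
    rw [hm] at hxr
    exact hx (Finset.mem_singleton.1 hxr)
  rcases h with h | h
  · exact (tm_ne_const v δ (rf v₀ v y) hδ fun d h1 h2 => e1 (h d h1 h2)).elim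
  · funext j
    obtain ⟨i1, i2⟩ := int_eq hv hδ j
    have hf := floor_hit (v j) δ hδ (by
      intro d hd1 hd2 hh
      rw [hit_iff v₀ v h0] at hh
      exact e2 (h d hd1 hd2) _ (xj_ne j) hh)
    have := hf.2 (by rw [hit_iff v₀ v h0]; exact e2 hη' _ (xj_ne j))
    omega

theorem split0_fwd {k : ℕ} {v₀ v : Val k}
    (hv : IsVal v) (h0 : Initial v₀) {δ : ℝ} (hδ : 0 < δ) (p : Finset (Fin (k+1) × Bool))
    (B : PatSeq k)
    (hp : ((0 : Fin (k+1)), true) ∈ p) 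
    (hη : PatternOf v₀ (shift v 0) (p :: B))
    (hη' : PatternOf v₀ (shift v δ) (((p \ {(0, true)}) :: B) ++ [{(0, true)}]))
    (hD : intPart v = intPart (shift v δ)) :
    ∀ d, 0 < d → d < δ → PatternOf v₀ (shift v d) (((p \ {(0, true)}) :: B) ++ [{(0, true)}]) := by
  have hD0 := congrFun hD 0
  obtain ⟨i1, i2⟩ := int_eq hv hδ 0
  have hp0 : ((0 : Fin (k+1)), false) ∈ p := by simpa using hη.1.2.2.2.1
  have ht0 : tm v 0 = 0 := by
    have := pat_eq hη (p := p) (by simp) hp hp0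
    rwa [rf_Z, rf_zero _ _ h0] at this
  rw [tm_zero_int, add_zero] at ht0
  have hfl : ⌊v 0 + δ⌋ = ⌊v 0⌋ := by omega
  have hlt := Int.lt_floor_add_one (v 0 + δ)
  rw [hfl] at hlt
  have ht : ∀ d, 0 < d → d ≤ δ → tm v d = ⌊v 0⌋ + 1 - (v 0 + d) := fun d h1 h2 =>
      tm_eq v d _ (by linarith) (by linarith)
  intro d hd1 hd2
  refine pat_transfer hη' fun x hx => ?_
  have t1 := ht d hd1 hd2.le
  have t2 := ht δ hδ le_rfl
  obtain ⟨r, hr, hxr⟩ := hη'.1.2.2.2.2 x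
  rcases List.mem_append.1 hr with hr | hr
  · have := pat_lt hη' hr (q := {(0, true)}) (by simp) hxr (y := (0, true)) (by simp)
    rw [rf_Z, rf_shift _ _ _ _ hx] at this
    left; constructor <;> linarith
  · rw [List.mem_singleton.1 hr] at hxr
    exact absurd (Finset.mem_singleton.1 hxr) hx

theorem split_fwd {k : ℕ} {v₀ v : Val k}
    (hv : IsVal v) (h0 : Initial v₀) {δ : ℝ} (hδ : 0 < δ) (p : Finset (Fin (k+1) × Bool))
    (A B : PatSeq k) (hA0 : A ≠ [])
    (hp : ((0 : Fin (k+1)), true) ∈ p) 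
    (hη : PatternOf v₀ (shift v 0) (A ++ p :: B))
    (hη' : PatternOf v₀ (shift v δ) (A ++ {(0, true)} :: (p \ {(0, true)}) :: B))
    (hD : intPart v = intPart (shift v δ)) :
    ∀ d, 0 < d → d < δ →
      PatternOf v₀ (shift v d) (A ++ {(0, true)} :: (p \ {(0, true)}) :: B) := by
  have hD0 := congrFun hD 0
  obtain ⟨i1, i2⟩ := int_eq hv hδ 0
  have htpos : 0 < tm v 0 := by
    refine (rf_zero v₀ (shift v 0) h0).symm.trans_lt ?_
    rw [← rf_Z v₀]
    rcases head_case hη.1 with h | ⟨r, A', rfl, h⟩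
    · exact absurd h.1 hA0
    · exact pat_lt hη (p := r) (q := p) (by simp) (by simp) h hp
  have hNlt : ((⌊v 0⌋ : ℤ) : ℝ) < v 0 := by
    refine lt_of_le_of_ne (Int.floor_le _) fun h => htpos.ne' ?_
    rw [tm_zero_int]; simpa using h
  have hfl : ⌊v 0 + δ⌋ = ⌊v 0⌋ := by omega
  have hlt := Int.lt_floor_add_one (v 0 + δ)
  rw [hfl] at hlt
  have ht : ∀ d, 0 ≤ d → d ≤ δ → tm v d = ⌊v 0⌋ + 1 - (v 0 + d) := fun d h1 h2 =>
      tm_eq v d _ (by linarith) (by linarith)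
  intro d hd1 hd2
  refine pat_transfer hη' fun x hx => ?_
  have t0 := ht 0 le_rfl hδ.le
  have t1 := ht d hd1.le hd2.le
  have t2 := ht δ hδ.le le_rfl
  obtain ⟨r, hr, hxr⟩ := hη.1.2.2.2.2 x
  simp only [List.mem_append, List.mem_cons] at hr
  rcases hr with hr | rfl | hr
  · have := pat_lt hη' hr (q := {(0, true)}) (by simp) hxr (y := (0, true)) (by simp)
    rw [rf_Z, rf_shift _ _ _ _ hx] at this
    left; constructor <;> linarith
  · have := pat_eq hη (p := r) (by simp) hp hxr
    rw [rf_Z, rf_shift _ _ _ _ hx] at this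
    right; constructor <;> linarith
  · rw [show A ++ p :: B = (A ++ [p]) ++ B by simp] at hη
    have := pat_lt hη (p := p) (by simp) hr hp hxr
    rw [rf_Z, rf_shift _ _ _ _ hx] at this
    right; constructor <;> linarith

/-- Lemma `progresspatternchange`. For any initialized pair `(v₀,v)`
and any `δ > 0`, `next([(v₀,v)], int(v)) = ([(v₀,v+δ)], int(v+δ))` iff `v` has one
pattern change for `δ`. -/
theorem progress_pattern_change (k : ℕ) (hk : 1 ≤ k) (v₀ v : Val k)
    (hv₀ : IsVal v₀) (hv : IsVal v) (h0 : Initial v₀)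
    (δ : ℝ) (hδ : 0 < δ)
    (η η' : PatSeq k) (hη : PatternOf v₀ v η) (hη' : PatternOf v₀ (shift v δ) η') :
    nextPair η (intPart v) = (η', intPart (shift v δ)) ↔ OneChange v₀ v δ := by
  have h1 : OneChange v₀ v δ ↔ NextPat η = η' ∧
      ((∀ δ', 0 < δ' → δ' < δ → PatternOf v₀ (shift v δ') η) ∨
       (∀ δ', 0 < δ' → δ' < δ → PatternOf v₀ (shift v δ') η')) := by
    constructor
    · rintro ⟨a, b, ha, hb, hab, h⟩
      rw [pat_unique hη ha, pat_unique hη' hb]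
      exact ⟨hab, h⟩
    · rintro ⟨h, h'⟩
      exact ⟨η, η', hη, hη', h, h'⟩
  rw [h1, nextPair, Prod.mk.injEq]
  refine and_congr_right fun hN => ?_
  have hη0 : PatternOf v₀ (shift v 0) η := by rwa [shift_zero']
  clear h1 hη
  obtain ⟨A, p, B, rfl, hp, hA, hB⟩ := decomp η hη0.1
  by_cases hpe : p = {(0, true)}
  · subst hpe
    rcases List.eq_nil_or_concat A with rfl | ⟨A', q, rfl⟩
    · have := hη0.1.2.2.2.1
      simp at this
    · have hA' : ∀ r ∈ A', ((0 : Fin (k+1)), true) ∉ r := fun r hr => hA r (by simp [hr])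
      have hq : ((0 : Fin (k+1)), true) ∉ q := hA q (by simp)
      simp only [List.concat_eq_append, List.append_assoc, List.cons_append, List.nil_append] at *
      rw [next_merge A' B q hA' hq] at hN
      subst hN
      exact merge_case hv h0 hδ A' B q hA' hq hB hη0 hη'
  · rw [nextD_split A B p hA hp hpe]
    by_cases hA0 : A = []
    · subst hA0
      simp only [List.nil_append] at *
      rw [next_split0 B p hp hpe] at hN
      subst hN
      exact ⟨fun hD => Or.inr (split0_fwd hv h0 hδ p B hp hη0 hη' hD),
        split_back hv h0 hδ p hp hpe _ _ (by simp) (by simp) hη0 hη'⟩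
    · rw [next_split A B p hA hp hpe hA0] at hN
      subst hN
      exact ⟨fun hD => Or.inr (split_fwd hv h0 hδ p A B hA0 hp hη0 hη' hD),
        split_back hv h0 hδ p hp hpe _ _ (by simp) (by simp) hη0 hη'⟩

end PTApaper
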